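/- arXiv:2104.14527 — 6 statements merged into one kernel-verified Lean document; each statement's English description precedes it below -/
import Mathlib

section
/- Optimal policies under parity-of-exposure constraints are envy-free (Proposition 1, first part): suppose the finite item set A is partitioned into categories A_1, …, A_S, and for every user m and context x, π_par^m(·|x) maximizes ∑_{a∈A} p(a) ρ^m(a|x) over all probability distributions p on A satisfying the parity constraint ∑_{a∈A_s} p(a) = |A_s|/|A| for every s ∈ {1,…,S}. Then for all users m and n, u^m(π_par^n) ≤ u^m(π_par^m), i.e. the policies (π_par^m)_{m=1}^M are 0-envy-free. -/
open Finset

/-- Optimal policies under parity-of-exposure constraints are envy-free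
(Proposition 1, first part).  The finite item set `A` is partitioned into `S`
categories by `cat : A → Fin S`.  A distribution `p` on `A` satisfies the parity
constraint if, for every category `s`, `∑_{a : cat a = s} p a = |A_s| / |A|`.
If, for every user `m` and context `x`, `πpar m x` is a probability distribution
on `A` satisfying the parity constraint and maximizing `∑_a p a · ρ m x a` among
all such distributions, then for all users `m n`, `u m (πpar n) ≤ 0 + u m (πpar m)`,
i.e. the policies `(πpar m)` are `0`-envy-free. -/
theorem parity_of_exposure_policies_are_envy_free
    {M S : ℕ} {X A : Type*} [Fintype X] [Fintype A]
    (q : Fin M → X → ℝ) (ρ : Fin M → X → A → ℝ) (cat : A → Fin S)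
    (πpar : Fin M → X → A → ℝ)
    (u : Fin M → (X → A → ℝ) → ℝ)
    (hu : ∀ m p, u m p = ∑ x, ∑ a, q m x * p x a * ρ m x a)
    (hq_nonneg : ∀ m x, 0 ≤ q m x) (hq_sum : ∀ m, ∑ x, q m x = 1)
    (hρ : ∀ m x a, ρ m x a ∈ Set.Icc (0 : ℝ) 1)
    (Par : (A → ℝ) → Prop)
    (hPar : ∀ p, Par p ↔ ((∀ a, 0 ≤ p a) ∧ (∑ a, p a = 1) ∧
      ∀ s : Fin S, ∑ a ∈ Finset.univ.filter (fun a => cat a = s), p a =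
        ((Finset.univ.filter (fun a => cat a = s)).card : ℝ) / (Fintype.card A : ℝ)))
    (hfeas : ∀ m x, Par (πpar m x))
    (hopt : ∀ m x (p : A → ℝ), Par p →
      ∑ a, p a * ρ m x a ≤ ∑ a, πpar m x a * ρ m x a) :
    ∀ m n, u m (πpar n) ≤ 0 + u m (πpar m) := by
  intro m n
  rw [hu, hu, zero_add]
  refine Finset.sum_le_sum fun x _ => ?_
  simp only [mul_assoc, ← Finset.mul_sum]
  exact mul_le_mul_of_nonneg_left (hopt m x _ (hfeas n x)) (hq_nonneg m x)
end

section
/- Optimal policies under equity-of-exposure constraints are not envy-free in general (Proposition 1, second part): consider A = {1,2,3,4} partitioned into categories A_1 = {1,2} and A_2 = {3,4}, and two users with rewards ρ^1(1)=1, ρ^1(2)=0, ρ^1(3)=0.8, ρ^1(4)=0.7 and ρ^2(1)=0.8, ρ^2(2)=0.7, ρ^2(3)=1, ρ^2(4)=0. Then for any probability distributions p^1, p^2 on A such that, for each m ∈ {1,2}, p^m maximizes ∑_{a∈A} p(a)ρ^m(a) over all distributions p satisfying the equity-of-exposure constraint for ρ^m, both users envy each other: ∑_a p^2(a)ρ^1(a)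 > ∑_a p^1(a)ρ^1(a) and ∑_a p^1(a)ρ^2(a) > ∑_a p^2(a)ρ^2(a). -/
open Finset

/-- `EEFeasible cat ρ p` says that `p` is a probability distribution on the four items
satisfying the equity-of-exposure constraint for the reward function `ρ`: for each
category `s`, the mass that `p` puts on category `s` equals the total reward of
category `s` divided by the total reward of all items. -/
def EEFeasible (cat : Fin 4 → Fin 2) (ρ : Fin 4 → ℝ) (p : Fin 4 → ℝ) : Prop :=
  (∀ a, 0 ≤ p a) ∧ (∑ a, p a = 1) ∧
  ∀ s : Fin 2, ∑ a ∈ Finset.univ.filter (fun a => cat a = s), p a =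
    (∑ a ∈ Finset.univ.filter (fun a => cat a = s), ρ a) / (∑ a, ρ a)

/-- Optimal policies under equity-of-exposure constraints are not envy-free in general
(Proposition 1, second part): with items `{0,1,2,3}` partitioned into categories
`{0,1}` and `{2,3}`, rewards `ρ¹ = (1, 0, 0.8, 0.7)` and `ρ² = (0.8, 0.7, 1, 0)`,
any distributions `p¹, p²` maximizing each user's utility under the
equity-of-exposure constraint make both users envy each other. -/
theorem equity_of_exposure_not_envy_free
    (ρ1 ρ2 : Fin 4 → ℝ)
    (hρ1 : ρ1 = ![1, 0, 0.8, 0.7]) (hρ2 : ρ2 = ![0.8, 0.7, 1, 0])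
    (cat : Fin 4 → Fin 2) (hcat : cat = ![0, 0, 1, 1])
    (p1 p2 : Fin 4 → ℝ)
    (h1feas : EEFeasible cat ρ1 p1)
    (h1opt : ∀ p, EEFeasible cat ρ1 p → ∑ a, p a * ρ1 a ≤ ∑ a, p1 a * ρ1 a)
    (h2feas : EEFeasible cat ρ2 p2)
    (h2opt : ∀ p, EEFeasible cat ρ2 p → ∑ a, p a * ρ2 a ≤ ∑ a, p2 a * ρ2 a) :
    (∑ a, p1 a * ρ1 a < ∑ a, p2 a * ρ1 a) ∧
    (∑ a, p2 a * ρ2 a < ∑ a, p1 a * ρ2 a) := by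
  subst hρ1 hρ2 hcat
  have f0 : (Finset.univ.filter (fun a : Fin 4 => (![0, 0, 1, 1] : Fin 4 → Fin 2) a = 0))
      = {0, 1} := by decide
  have f1 : (Finset.univ.filter (fun a : Fin 4 => (![0, 0, 1, 1] : Fin 4 → Fin 2) a = 1))
      = {2, 3} := by decide
  have o1 := h1opt ![0.4, 0, 0.6, 0] (by
    refine ⟨?_, ?_, ?_⟩
    · intro a; fin_cases a <;> norm_num
    · simp [Fin.sum_univ_four]; norm_num
    · rw [Fin.forall_fin_two, f0, f1]
      simp [Fin.sum_univ_four]; norm_num)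
  have o2 := h2opt ![0.6, 0, 0.4, 0] (by
    refine ⟨?_, ?_, ?_⟩
    · intro a; fin_cases a <;> norm_num
    · simp [Fin.sum_univ_four]; norm_num
    · rw [Fin.forall_fin_two, f0, f1]
      simp [Fin.sum_univ_four]; norm_num)
  obtain ⟨n1, -, c1⟩ := h1feas
  obtain ⟨n2, -, c2⟩ := h2feas
  rw [Fin.forall_fin_two, f0, f1] at c1 c2
  obtain ⟨c10, c11⟩ := c1
  obtain ⟨c20, c21⟩ := c2
  have a1 := n1 1
  have a3 := n1 3
  have b1 := n2 1
  have b3 := n2 3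
  simp [Fin.sum_univ_four] at o1 o2 c10 c11 c20 c21 ⊢
  norm_num at o1 o2 c10 c11 c20 c21 ⊢
  constructor <;> linarith
end

section
/- The optimal value of the equity-of-exposure linear program: let A be a finite item set partitioned into categories A_1, …, A_S and ρ: A → [0,1] with ∑_{a∈A} ρ(a) > 0. Then the maximum of ∑_{a∈A} p(a)ρ(a) over probability distributions p on A satisfying the equity-of-exposure constraint for ρ equals ∑_{s=1}^S (max_{a∈A_s} ρ(a)) · (∑_{a∈A_s} ρ(a)) / (∑_{a∈A} ρ(a)), and it is attained by the distribution that puts, in each category A_s, the whole category mass (∑_{a∈A_s} ρ(a))/(∑_{a∈A} ρ(a)) on an item of A_s maximizing ρ. -/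
open Finset

/-- `EEFeasibleG cat ρ p` says that `p` is a probability distribution on the finite
item set `A` (partitioned into categories by `cat : A → Fin S`) satisfying the
equity-of-exposure constraint for the reward function `ρ`: for each category `s`,
the mass that `p` puts on category `s` equals the total reward of category `s`
divided by the total reward of all items. -/
def EEFeasibleG {A : Type*} [Fintype A] {S : ℕ} (cat : A → Fin S) (ρ : A → ℝ)
    (p : A → ℝ) : Prop :=
  (∀ a, 0 ≤ p a) ∧ (∑ a, p a = 1) ∧
  ∀ s : Fin S, ∑ a ∈ Finset.univ.filter (fun a => cat a = s), p a =
    (∑ a ∈ Finset.univ.filter (fun a => cat a = s), ρ a) / (∑ a, ρ a)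

/-- The optimal value of the equity-of-exposure linear program: with `b s` an item of
category `s` maximizing `ρ` over that category, the distribution `pstar` giving, in
each category `s`, the whole category mass to `b s` is feasible, its utility equals
`∑_s (max_{a ∈ A_s} ρ a) · (∑_{a ∈ A_s} ρ a) / (∑_a ρ a)`, and this value is the
maximum utility over all feasible distributions. -/
theorem equity_of_exposure_optimal_value
    {A : Type*} [Fintype A] [DecidableEq A] {S : ℕ} (cat : A → Fin S) (ρ : A → ℝ)
    (hρ : ∀ a, ρ a ∈ Set.Icc (0 : ℝ) 1) (hρpos : 0 < ∑ a, ρ a)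
    (b : Fin S → A) (hb : ∀ s, cat (b s) = s)
    (hbmax : ∀ s a, cat a = s → ρ a ≤ ρ (b s))
    (pstar : A → ℝ)
    (hpstar : pstar = fun a => if a = b (cat a) then
      (∑ a' ∈ Finset.univ.filter (fun a' => cat a' = cat a), ρ a') / (∑ a', ρ a')
      else 0) :
    EEFeasibleG cat ρ pstar ∧
    (∑ a, pstar a * ρ a =
      ∑ s : Fin S, ρ (b s) *
        (∑ a ∈ Finset.univ.filter (fun a => cat a = s), ρ a) / (∑ a, ρ a)) ∧
    (∀ p, EEFeasibleG cat ρ p →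
      ∑ a, p a * ρ a ≤
        ∑ s : Fin S, ρ (b s) *
          (∑ a ∈ Finset.univ.filter (fun a => cat a = s), ρ a) / (∑ a, ρ a)) := by
  have key : ∀ (g : A → ℝ) (s : Fin S),
      ∑ a ∈ Finset.univ.filter (fun a => cat a = s), pstar a * g a =
      (∑ a ∈ Finset.univ.filter (fun a => cat a = s), ρ a) / (∑ a, ρ a) * g (b s) := by
    intro g s
    rw [Finset.sum_eq_single (b s)]
    · rw [hpstar]
      simp [hb]
    · intro a ha hne
      have h : cat a = s := by simpa using ha
      have h2 : ¬ (a = b (cat a)) := by rw [h]; exact hne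
      rw [hpstar]
      simp only [if_neg h2, zero_mul]
    · intro h
      exact absurd (by simp [hb]) h
  have fib : ∀ f : A → ℝ, ∑ a, f a =
      ∑ s : Fin S, ∑ a ∈ Finset.univ.filter (fun a => cat a = s), f a := fun f =>
    (Finset.sum_fiberwise Finset.univ cat f).symm
  have mass : ∀ s : Fin S, ∑ a ∈ Finset.univ.filter (fun a => cat a = s), pstar a =
      (∑ a ∈ Finset.univ.filter (fun a => cat a = s), ρ a) / (∑ a, ρ a) := by
    intro s
    simpa using key (fun _ => 1) s
  refine ⟨⟨?_, ?_, mass⟩, ?_, ?_⟩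
  · intro a
    rw [hpstar]
    dsimp only
    split_ifs
    · exact div_nonneg (Finset.sum_nonneg fun i _ => (hρ i).1) hρpos.le
    · exact le_rfl
  · rw [fib, Finset.sum_congr rfl (fun s _ => mass s), ← Finset.sum_div, ← fib ρ,
      div_self hρpos.ne']
  · rw [fib]
    refine Finset.sum_congr rfl fun s _ => ?_
    rw [key ρ s]
    ring
  · rintro p ⟨hp, -, hc⟩
    rw [fib]
    refine Finset.sum_le_sum fun s _ => ?_
    rw [mul_div_assoc, ← hc s, Finset.mul_sum]
    refine Finset.sum_le_sum fun a ha => ?_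
    have h : cat a = s := by simpa using ha
    rw [mul_comm]
    exact mul_le_mul_of_nonneg_right (hbmax s a h) (hp a)
end

section
/- If every user likes only a single item category, optimal equity-of-exposure policies are envy-free: let A be a finite item set partitioned into categories A_1, …, A_S and, for each user m ∈ {1,…,M}, let ρ^m: A → [0,1] with ∑_{a∈A} ρ^m(a) > 0 and suppose there exists a category s_m such that ρ^m(a) = 0 for all a ∉ A_{s_m}. Then (i) the maximum of ∑_a p(a)ρ^m(a) over probability distributions p satisfying the equity-of-exposure constraint for ρ^m equals max_{a∈A} ρ^m(a), the unconstrained optimal utility of user m; and (ii) consequently, for any policies (p^m)_{m=1}^M where each p^m attains this constrained maximum, the system is 0-envy-free: ∑_a p^n(a)ρ^m(a) ≤ ∑_a p^m(a)ρ^m(a) for all m, n. -/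
open Finset

/-- If every user likes only a single item category, optimal equity-of-exposure
policies are envy-free: if each user `m` has `ρ m a = 0` outside a single category
`sm m`, then (i) the maximum utility over distributions satisfying the
equity-of-exposure constraint for `ρ m` equals `max_{a ∈ A} ρ m a`, the
unconstrained optimum, and (ii) any policies `(p m)` attaining these constrained
maxima form a `0`-envy-free system. -/
theorem single_category_equity_of_exposure_envy_free
    {A : Type*} [Fintype A] [Nonempty A] {S M : ℕ}
    (cat : A → Fin S) (ρ : Fin M → A → ℝ)
    (hρ : ∀ m a, ρ m a ∈ Set.Icc (0 : ℝ) 1) (hρpos : ∀ m, 0 < ∑ a, ρ m a)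
    (sm : Fin M → Fin S) (honecat : ∀ m a, cat a ≠ sm m → ρ m a = 0)
    (p : Fin M → A → ℝ)
    (hfeas : ∀ m, EEFeasibleG cat (ρ m) (p m))
    (hopt : ∀ m p', EEFeasibleG cat (ρ m) p' →
      ∑ a, p' a * ρ m a ≤ ∑ a, p m a * ρ m a) :
    (∀ m, ∑ a, p m a * ρ m a = Finset.univ.sup' Finset.univ_nonempty (ρ m)) ∧
    (∀ m n, ∑ a, p n a * ρ m a ≤ ∑ a, p m a * ρ m a) := by
  have hub : ∀ m n, ∑ a, p n a * ρ m a ≤ Finset.univ.sup' Finset.univ_nonempty (ρ m) := by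
    intro m n
    obtain ⟨h0, h1, _⟩ := hfeas n
    calc ∑ a, p n a * ρ m a
        ≤ ∑ a, p n a * Finset.univ.sup' Finset.univ_nonempty (ρ m) :=
          Finset.sum_le_sum fun a _ =>
            mul_le_mul_of_nonneg_left (Finset.le_sup' (ρ m) (Finset.mem_univ a)) (h0 a)
      _ = Finset.univ.sup' Finset.univ_nonempty (ρ m) := by
          rw [← Finset.sum_mul, h1, one_mul]
  have heq : ∀ m, ∑ a, p m a * ρ m a = Finset.univ.sup' Finset.univ_nonempty (ρ m) := by
    intro m
    apply le_antisymm (hub m m)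
    classical
    obtain ⟨b, -, hb⟩ := Finset.exists_mem_eq_sup' Finset.univ_nonempty (ρ m)
    -- the best item has positive reward, hence lies in the liked category
    have hcat : cat b = sm m := by
      by_contra hne
      have hz := honecat m b hne
      have hle : ∑ a, ρ m a ≤ 0 := Finset.sum_nonpos fun a _ => by
        have := Finset.le_sup' (ρ m) (Finset.mem_univ a)
        rw [hb, hz] at this
        exact this
      exact absurd (hρpos m) (not_lt.mpr hle)
    have hf : EEFeasibleG cat (ρ m) (fun a => if a = b then 1 else 0) := by
      refine ⟨fun a => by dsimp only; split_ifs <;> norm_num, by simp, fun s => ?_⟩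
      by_cases hs : s = sm m
      · subst hs
        have h2 : ∑ a ∈ Finset.univ.filter (fun a => cat a = sm m), ρ m a = ∑ a, ρ m a := by
          apply Finset.sum_subset (Finset.filter_subset _ _)
          intro a _ ha
          exact honecat m a (by simpa using ha)
        rw [h2, div_self (hρpos m).ne']
        simp [hcat]
      · have h2 : ∑ a ∈ Finset.univ.filter (fun a => cat a = s), ρ m a = 0 := by
          apply Finset.sum_eq_zero
          intro a ha
          apply honecat m a
          rw [(Finset.mem_filter.mp ha).2]
          exact hs
        rw [h2, zero_div]
        have hbs : cat b ≠ s := by rw [hcat]; exact fun h => hs h.symm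
        simp [hbs]
    have h3 := hopt m _ hf
    rw [hb]
    simpa using h3
  exact ⟨heq, fun m n => (hub m n).trans (heq m).ge⟩
end

section
/- Group envy-freeness implies envy-freeness under homogeneity (Proposition 2): let ε, ε̃ > 0, let G be a partition of the users {1,…,M} into disjoint groups, and assume that any two users m, n in the same group g satisfy q^m = q^n, sup_{x∈X} ∑_{a∈A} |π^m(a|x) − π^n(a|x)| ≤ ε̃, and sup_{x∈X} ∑_{a∈A} |ρ^m(a|x) − ρ^n(a|x)| ≤ ε̃. If the system is ε-group-envy-free, i.e. U(g,g') ≤ U(g,g) + ε for all groups g, g' ∈ G, then it is (ε + 4ε̃)-envy-free: u^m(π^n) ≤ u^m(π^m) + ε + 4ε̃ for all users m, n. -/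
open Finset

/-- Group envy-freeness implies envy-freeness under homogeneity (Proposition 2):
users are partitioned into `G` groups via `grp : Fin M → Fin G` (each group
nonempty); any two users of the same group have the same context distribution,
policies within `ε̃` of each other in `L¹` distance for every context, and rewards
within `ε̃` of each other in `L¹` distance for every context.  The group utility is
`U g g' = (1/|g|) ∑_{m ∈ g} u m (average policy of g')`.  If the system is
`ε`-group-envy-free, then it is `(ε + 4ε̃)`-envy-free. -/
theorem group_envy_free_implies_envy_free
    {M G : ℕ} {X A : Type*} [Fintype X] [Fintype A]
    (q : Fin M → X → ℝ) (π : Fin M → X → A → ℝ) (ρ : Fin M → X → A → ℝ)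
    (u : Fin M → (X → A → ℝ) → ℝ)
    (hu : ∀ m p, u m p = ∑ x, ∑ a, q m x * p x a * ρ m x a)
    (hq_nonneg : ∀ m x, 0 ≤ q m x) (hq_sum : ∀ m, ∑ x, q m x = 1)
    (hπ_nonneg : ∀ m x a, 0 ≤ π m x a) (hπ_sum : ∀ m x, ∑ a, π m x a = 1)
    (hρ : ∀ m x a, ρ m x a ∈ Set.Icc (0 : ℝ) 1)
    (ε εt : ℝ) (hε : 0 < ε) (hεt : 0 < εt)
    (grp : Fin M → Fin G)
    (grpSet : Fin G → Finset (Fin M))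
    (hgrpSet : ∀ g, grpSet g = Finset.univ.filter (fun m => grp m = g))
    (hne : ∀ g, (grpSet g).Nonempty)
    (hq_hom : ∀ m n, grp m = grp n → q m = q n)
    (hπ_hom : ∀ m n, grp m = grp n → ∀ x, ∑ a, |π m x a - π n x a| ≤ εt)
    (hρ_hom : ∀ m n, grp m = grp n → ∀ x, ∑ a, |ρ m x a - ρ n x a| ≤ εt)
    (U : Fin G → Fin G → ℝ)
    (hU : ∀ g g', U g g' = (1 / ((grpSet g).card : ℝ)) * ∑ m ∈ grpSet g,
      u m (fun x a => (1 / ((grpSet g').card : ℝ)) * ∑ n ∈ grpSet g', π n x a))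
    (hGEF : ∀ g g', U g g' ≤ U g g + ε) :
    ∀ m n, u m (π n) ≤ u m (π m) + ε + 4 * εt := by
  have key : ∀ m m' n n', grp m = grp m' → grp n = grp n' →
      u m (π n) ≤ u m' (π n') + 2 * εt := by
    intro m m' n n' hm hn
    rw [hu, hu, hq_hom m m' hm]
    have h1 : ∀ x, ∑ a, q m' x * π n x a * ρ m x a ≤
        ∑ a, q m' x * π n' x a * ρ m' x a + q m' x * (2 * εt) := by
      intro x
      have h2 : ∑ a, π n x a * ρ m x a ≤ ∑ a, (π n' x a * ρ m' x a
          + |π n x a - π n' x a| + |ρ m x a - ρ m' x a|) := by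
        apply Finset.sum_le_sum
        intro a _
        have hp1 : π n' x a ≤ 1 := by
          rw [← hπ_sum n' x]
          exact Finset.single_le_sum (fun b _ => hπ_nonneg n' x b) (Finset.mem_univ a)
        have hp0 := hπ_nonneg n' x a
        obtain ⟨r0, r1⟩ := hρ m x a
        have e1 : (π n x a - π n' x a) * ρ m x a ≤ |π n x a - π n' x a| :=
          le_trans (mul_le_mul_of_nonneg_right (le_abs_self _) r0)
            (mul_le_of_le_one_right (abs_nonneg _) r1)
        have e2 : π n' x a * (ρ m x a - ρ m' x a) ≤ |ρ m x a - ρ m' x a| :=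
          le_trans (mul_le_mul_of_nonneg_left (le_abs_self _) hp0)
            (mul_le_of_le_one_left (abs_nonneg _) hp1)
        nlinarith
      rw [Finset.sum_add_distrib, Finset.sum_add_distrib] at h2
      have h3 := hπ_hom n n' hn x
      have h4 := hρ_hom m m' hm x
      have h5 : ∑ a, π n x a * ρ m x a ≤ ∑ a, π n' x a * ρ m' x a + 2 * εt := by linarith
      have h6 := mul_le_mul_of_nonneg_left h5 (hq_nonneg m' x)
      simpa only [mul_add, Finset.mul_sum, mul_assoc] using h6
    have h7 := Finset.sum_le_sum (s := Finset.univ) fun x _ => h1 x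
    rw [Finset.sum_add_distrib, ← Finset.sum_mul, hq_sum, one_mul] at h7
    exact h7
  have avg : ∀ (g g' : Fin G), U g g' = (∑ m ∈ grpSet g, (∑ n ∈ grpSet g', u m (π n))
      / ((grpSet g').card : ℝ)) / ((grpSet g).card : ℝ) := by
    intro g g'
    rw [hU, one_div, inv_mul_eq_div]
    congr 1
    refine Finset.sum_congr rfl fun m _ => ?_
    simp only [hu]
    symm
    rw [Finset.sum_comm, Finset.sum_div]
    refine Finset.sum_congr rfl fun x _ => ?_
    rw [Finset.sum_comm, Finset.sum_div]
    refine Finset.sum_congr rfl fun a _ => ?_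
    rw [← Finset.sum_mul, ← Finset.mul_sum]
    ring
  have hpos : ∀ g, (0 : ℝ) < ((grpSet g).card : ℝ) := fun g => by
    exact_mod_cast (hne g).card_pos
  have mem : ∀ g m, m ∈ grpSet g → grp m = g := by
    intro g m h
    rw [hgrpSet] at h
    simpa using h
  have avg_le : ∀ (g : Fin G) (f : Fin M → ℝ) (c : ℝ), (∀ m, grp m = g → f m ≤ c) →
      (∑ m ∈ grpSet g, f m) / ((grpSet g).card : ℝ) ≤ c := by
    intro g f c h
    rw [div_le_iff₀ (hpos g), mul_comm, ← nsmul_eq_mul]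
    exact Finset.sum_le_card_nsmul _ _ _ fun m hm => h m (mem g m hm)
  have le_avg : ∀ (g : Fin G) (f : Fin M → ℝ) (c : ℝ), (∀ m, grp m = g → c ≤ f m) →
      c ≤ (∑ m ∈ grpSet g, f m) / ((grpSet g).card : ℝ) := by
    intro g f c h
    rw [le_div_iff₀ (hpos g), mul_comm, ← nsmul_eq_mul]
    exact Finset.card_nsmul_le_sum _ _ _ fun m hm => h m (mem g m hm)
  intro m n
  have lo : u m (π n) - 2 * εt ≤ U (grp m) (grp n) := by
    rw [avg]
    refine le_avg _ _ _ fun m' hm' => le_avg _ _ _ fun n' hn' => ?_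
    linarith [key m m' n n' hm'.symm hn'.symm]
  have hi : U (grp m) (grp m) ≤ u m (π m) + 2 * εt := by
    rw [avg]
    exact avg_le _ _ _ fun m' hm' => avg_le _ _ _ fun n' hn' => key m' m n' m hm' hn'
  linarith [hGEF (grp m) (grp n)]
end

section
/- Safety of the conservative check ξ_t (step of Theorem 3): let K ≥ 1, t ≥ 1 be integers, α ∈ [0,1], and let k_1, …, k_t ∈ {0,1,…,K} be the arms pulled, with k_t = ℓ ≠ 0. Let μ_0, …, μ_K ∈ [0,1] be the arm means, r_1, …, r_{t−1} ∈ ℝ the observed rewards, A = {s ∈ {1,…,t−1} : k_s ≠ 0} and N_0 = |{s ∈ {1,…,t−1} : k_s = 0}|. Suppose L_ℓ ≤ μ_ℓ, μ_0 ≤ U_0, and Φ ≥ 0 satisfies ∑_{s∈A}(μ_{k_s} − r_s) ≥ −Φ. If ξ := ∑_{s∈A} r_s − Φ + L_ℓ + (N_0 − (1−α)t)·U_0 ≥ 0, then the conservative exploration constraint holds at time t: ∑_{s=1}^t μ_{k_s} ≥ (1−α)·μ_0·t. -/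
open Finset

/-- Safety of the conservative check `ξ_t` (step of Theorem 3): at time `t`, if the
arm pulled is `ℓ ≠ 0`, the confidence bounds `Lℓ ≤ μ ℓ` and `μ 0 ≤ U0` hold, the
deviation bound `∑_{s∈A}(μ_{k_s} − r_s) ≥ −Φ` holds on the exploratory rounds
`A = {s < t−1 : k_s ≠ 0}`, and the conservative check
`ξ = ∑_{s∈A} r_s − Φ + Lℓ + (N₀ − (1−α)t)·U0 ≥ 0` passes, then the conservative
exploration constraint `∑_{s<t} μ_{k_s} ≥ (1−α)·μ₀·t` holds at time `t`.
(Rounds are indexed by `s ∈ {0, …, t−1}`, the last round being `s = t−1`.) -/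
theorem conservative_check_safety
    (K t : ℕ) (hK : 1 ≤ K) (ht : 1 ≤ t) (α : ℝ) (hα0 : 0 ≤ α) (hα1 : α ≤ 1)
    (k : ℕ → ℕ) (hk : ∀ s, s < t → k s ≤ K)
    (ℓ : ℕ) (hℓ : ℓ ≠ 0) (hkt : k (t - 1) = ℓ)
    (μ : ℕ → ℝ) (hμ0 : ∀ i, i ≤ K → 0 ≤ μ i) (hμ1 : ∀ i, i ≤ K → μ i ≤ 1)
    (r : ℕ → ℝ) (Lℓ U0 Φ : ℝ) (hL : Lℓ ≤ μ ℓ) (hU : μ 0 ≤ U0) (hΦ : 0 ≤ Φ)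
    (A : Finset ℕ) (hA : A = (Finset.range (t - 1)).filter (fun s => k s ≠ 0))
    (N0 : ℕ) (hN0 : N0 = ((Finset.range (t - 1)).filter (fun s => k s = 0)).card)
    (hdev : ∑ s ∈ A, (μ (k s) - r s) ≥ -Φ)
    (hξ : (∑ s ∈ A, r s) - Φ + Lℓ + ((N0 : ℝ) - (1 - α) * t) * U0 ≥ 0) :
    ∑ s ∈ Finset.range t, μ (k s) ≥ (1 - α) * μ 0 * t := by
  have hsplit : ∑ s ∈ Finset.range t, μ (k s) = ∑ s ∈ A, μ (k s) + N0 * μ 0 + μ ℓ := by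
    obtain ⟨n, rfl⟩ : ∃ n, t = n + 1 := ⟨t - 1, by omega⟩
    simp only [Nat.add_sub_cancel] at hkt hA hN0
    rw [Finset.sum_range_succ, hkt, hA, hN0,
      ← Finset.sum_filter_add_sum_filter_not (Finset.range n) (fun s => k s = 0)]
    have h0 : ∑ s ∈ (Finset.range n).filter (fun s => k s = 0), μ (k s)
        = ((Finset.range n).filter (fun s => k s = 0)).card * μ 0 := by
      rw [← nsmul_eq_mul, ← Finset.sum_const]
      refine Finset.sum_congr rfl fun s hs => ?_
      rw [(Finset.mem_filter.mp hs).2]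
    rw [h0]
    ring
  have hSA : 0 ≤ ∑ s ∈ A, μ (k s) := by
    refine Finset.sum_nonneg fun s hs => hμ0 _ (hk s ?_)
    rw [hA] at hs
    have := Finset.mem_range.mp (Finset.mem_filter.mp hs).1
    omega
  have hl : 0 ≤ μ ℓ := hμ0 _ (hkt ▸ hk (t - 1) (by omega))
  have h0 : 0 ≤ μ 0 := hμ0 0 (Nat.zero_le _)
  rw [Finset.sum_sub_distrib] at hdev
  rw [hsplit]
  rcases le_total ((N0 : ℝ) - (1 - α) * t) 0 with h | h
  · have := mul_le_mul_of_nonpos_left hU h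
    linarith
  · have := mul_nonneg h h0
    linarith
end
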